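/- Let K be a field and let A and B be K-algebras which are Morita equivalent, i.e. there is a K-linear equivalence between the category of (left) A-modules and the category of (left) B-modules. Then there is a K-linear isomorphism of vector spaces A/[A,A] ≅ B/[B,B]. -/

import Mathlib

open CategoryTheory

/-- The `K`-submodule of an algebra `A` spanned by all commutators `a * b - b * a`. -/
def commutatorSubmodule (K A : Type*) [CommRing K] [Ring A] [Algebra K A] : Submodule K A :=
  Submodule.span K {x : A | ∃ a b : A, x = a * b - b * a}

/-- The class of a commutator vanishes in the quotient. -/
lemma commQuot_swap (K : Type*) {A : Type*} [CommRing K] [Ring A] [Algebra K A] (a b : A) :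
    (commutatorSubmodule K A).mkQ (a * b) = (commutatorSubmodule K A).mkQ (b * a) := by
  rw [← sub_eq_zero, ← map_sub, Submodule.mkQ_apply, Submodule.Quotient.mk_eq_zero]
  exact Submodule.subset_span ⟨a, b, rfl⟩

/-- Anti-isomorphic algebras have isomorphic commutator quotients. -/
noncomputable def commQuotEquivOfAnti (K : Type*) {A A' : Type*} [CommRing K] [Ring A] [Algebra K A]
    [Ring A'] [Algebra K A'] (e : A ≃ₗ[K] A') (he : ∀ x y, e (x * y) = e y * e x) :
    (A ⧸ commutatorSubmodule K A) ≃ₗ[K] (A' ⧸ commutatorSubmodule K A') :=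
  Submodule.Quotient.equiv _ _ e (by
    unfold commutatorSubmodule
    rw [Submodule.map_span]
    congr 1
    ext x
    constructor
    · rintro ⟨_, ⟨a, b, rfl⟩, rfl⟩
      exact ⟨e b, e a, by simp [he]⟩
    · rintro ⟨a, b, rfl⟩
      exact ⟨e.symm b * e.symm a - e.symm a * e.symm b, ⟨_, _, rfl⟩, by simp [he]⟩)

section Cat

universe v w

variable (K : Type*) [CommRing K] {C : Type w} [Category.{v} C] [Preadditive C] [Linear K C]

/-- The trace class of an endomorphism. -/
noncomputable def trCl {X : C} : (X ⟶ X) →ₗ[K] (End X ⧸ commutatorSubmodule K (End X)) :=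
  (commutatorSubmodule K (End X)).mkQ

lemma trCl_swap_end {X : C} (f g : X ⟶ X) : trCl K (f ≫ g) = trCl K (g ≫ f) :=
  commQuot_swap K (A := End X) g f

/-- Transfer map. -/
noncomputable def transferPre {X Y : C} {n : ℕ} (u : Fin n → (X ⟶ Y)) (v : Fin n → (Y ⟶ X)) :
    (X ⟶ X) →ₗ[K] (End Y ⧸ commutatorSubmodule K (End Y)) :=
  trCl K ∘ₗ ∑ j, (Linear.leftComp K Y (v j)) ∘ₗ (Linear.rightComp K X (u j))

lemma transferPre_apply {X Y : C} {n : ℕ} (u : Fin n → (X ⟶ Y)) (v : Fin n → (Y ⟶ X))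
    (a : X ⟶ X) : transferPre K u v a = ∑ j, trCl K (v j ≫ a ≫ u j) := by
  simp [transferPre]

lemma transferPre_swap {X Y : C} {n : ℕ} (u : Fin n → (X ⟶ Y)) (v : Fin n → (Y ⟶ X))
    (h : ∑ j, u j ≫ v j = 𝟙 X) (a b : X ⟶ X) :
    transferPre K u v (a ≫ b) = transferPre K u v (b ≫ a) := by
  have key : ∀ a b : X ⟶ X, transferPre K u v (a ≫ b) =
      ∑ j, ∑ k, trCl K ((v j ≫ a ≫ u k) ≫ (v k ≫ b ≫ u j)) := by
    intro a b
    rw [transferPre_apply]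
    refine Finset.sum_congr rfl fun j _ => ?_
    rw [← map_sum]
    congr 1
    have : (a ≫ b) = ∑ k, a ≫ (u k ≫ v k) ≫ b := by
      rw [← Preadditive.comp_sum, ← Preadditive.sum_comp, h, Category.id_comp]
    rw [this]
    simp [Preadditive.comp_sum, Preadditive.sum_comp]
  rw [key, key, Finset.sum_comm]
  refine Finset.sum_congr rfl fun j _ => Finset.sum_congr rfl fun k _ => ?_
  exact trCl_swap_end K _ _

/-- Transfer map on quotients. -/
noncomputable def transfer {X Y : C} {n : ℕ} (u : Fin n → (X ⟶ Y)) (v : Fin n → (Y ⟶ X))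
    (h : ∑ j, u j ≫ v j = 𝟙 X) :
    (End X ⧸ commutatorSubmodule K (End X)) →ₗ[K] (End Y ⧸ commutatorSubmodule K (End Y)) :=
  (commutatorSubmodule K (End X)).liftQ (transferPre K u v) (by
    refine Submodule.span_le.2 ?_
    rintro _ ⟨a, b, rfl⟩
    refine (map_sub (transferPre K u v) (a * b) (b * a)).trans ?_
    exact sub_eq_zero.2 (transferPre_swap K u v h b a))

lemma transfer_trCl {X Y : C} {n : ℕ} (u : Fin n → (X ⟶ Y)) (v : Fin n → (Y ⟶ X))
    (h : ∑ j, u j ≫ v j = 𝟙 X) (a : X ⟶ X) :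
    transfer K u v h (trCl K a) = ∑ j, trCl K (v j ≫ a ≫ u j) :=
  transferPre_apply K u v a

lemma transfer_transfer {X Y : C} {n m : ℕ} (u : Fin n → (X ⟶ Y)) (v : Fin n → (Y ⟶ X))
    (h : ∑ j, u j ≫ v j = 𝟙 X) (g : Fin m → (Y ⟶ X)) (f : Fin m → (X ⟶ Y))
    (h' : ∑ i, g i ≫ f i = 𝟙 Y) (x : End X ⧸ commutatorSubmodule K (End X)) :
    transfer K g f h' (transfer K u v h x) = x := by
  obtain ⟨a, rfl⟩ := Submodule.mkQ_surjective _ x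
  change transfer K g f h' (transfer K u v h (trCl K a)) = trCl K a
  rw [transfer_trCl, map_sum]
  simp only [transfer_trCl]
  have : ∀ j i, trCl K (f i ≫ (v j ≫ a ≫ u j) ≫ g i) =
      trCl K (u j ≫ (g i ≫ f i) ≫ v j ≫ a) := by
    intro j i
    have := trCl_swap_end K (f i ≫ v j ≫ a) (u j ≫ g i)
    simpa using this
  simp only [this, ← map_sum, ← Preadditive.comp_sum, ← Preadditive.sum_comp, h', Category.id_comp]
  congr 1
  simp only [← Category.assoc]
  rw [← Preadditive.sum_comp, h, Category.id_comp]

/-- The transfer isomorphism. -/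
noncomputable def transferEquiv {X Y : C} {n m : ℕ} (u : Fin n → (X ⟶ Y)) (v : Fin n → (Y ⟶ X))
    (h : ∑ j, u j ≫ v j = 𝟙 X) (g : Fin m → (Y ⟶ X)) (f : Fin m → (X ⟶ Y))
    (h' : ∑ i, g i ≫ f i = 𝟙 Y) :
    (End X ⧸ commutatorSubmodule K (End X)) ≃ₗ[K] (End Y ⧸ commutatorSubmodule K (End Y)) :=
  LinearEquiv.ofLinearMap (transfer K u v h) (transfer K g f h')
    (LinearMap.ext fun x => transfer_transfer K g f h' u v h x)
    (LinearMap.ext fun x => transfer_transfer K u v h g f h' x)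

end Cat

universe u

lemma isSeparator_self (R : Type u) [Ring R] : IsSeparator (ModuleCat.of R R) := by
  rw [isSeparator_def]
  intro X Y f g hfg
  ext x
  have := hfg (ModuleCat.ofHom (LinearMap.toSpanSingleton R X x))
  have := congrArg (fun t => t.hom (1 : R)) this
  simpa using this

/-- The regular module is a retract of a finite power of any separator. -/
lemma exists_retract_of_separator (R : Type u) [Ring R] (P : ModuleCat.{u} R)
    (hP : IsSeparator P) : ∃ (n : ℕ) (g : Fin n → (ModuleCat.of R R ⟶ P))
      (f : Fin n → (P ⟶ ModuleCat.of R R)), ∑ i, g i ≫ f i = 𝟙 (ModuleCat.of R R) := by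
  let s : Set R := {x | ∃ (f : P ⟶ ModuleCat.of R R) (p : P), f.hom p = x}
  let T : Submodule R R := Submodule.span R s
  have hT : (1 : R) ∈ T := by
    have h0 : ModuleCat.ofHom T.mkQ = 0 := by
      rw [isSeparator_def] at hP
      apply hP
      intro h
      ext p
      have : T.mkQ (h.hom p) = 0 := by
        rw [Submodule.mkQ_apply, Submodule.Quotient.mk_eq_zero]
        exact Submodule.subset_span ⟨h, p, rfl⟩
      simpa using this
    have h1 := congrArg (fun t => t.hom (1 : R)) h0
    have h2 : T.mkQ (1 : R) = 0 := by simpa using h1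
    rwa [Submodule.mkQ_apply, Submodule.Quotient.mk_eq_zero] at h2
  obtain ⟨n, c, x, hx⟩ := Submodule.mem_span_set'.1 hT
  choose f p hfp using fun i => (x i).2
  refine ⟨n, fun i => ModuleCat.ofHom (LinearMap.toSpanSingleton R P (c i • p i)), f, ?_⟩
  apply ModuleCat.hom_ext
  apply LinearMap.ext_ring
  rw [ModuleCat.hom_sum, LinearMap.sum_apply]
  simp only [ModuleCat.hom_comp, ModuleCat.hom_ofHom, LinearMap.comp_apply,
    LinearMap.toSpanSingleton_apply, one_smul, map_smul, hfp, ModuleCat.hom_id, LinearMap.id_apply]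
  exact hx

/-- Right multiplications identify `A` with the endomorphisms of the regular module. -/
noncomputable def regEnd (K : Type u) [Field K] (A : Type u) [Ring A] [Algebra K A] :
    A ≃ₗ[K] End (ModuleCat.of A A) where
  toFun a := ModuleCat.ofHom (LinearMap.toSpanSingleton A A a)
  invFun f := f.hom (1 : A)
  left_inv a := by simp
  right_inv f := by
    apply ModuleCat.hom_ext
    apply LinearMap.ext_ring
    simp
  map_add' a b := by
    apply ModuleCat.hom_ext
    apply LinearMap.ext_ring
    change (1 : A) • (a + b) = (1 : A) • a + (1 : A) • b
    simp
  map_smul' k a := by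
    apply ModuleCat.hom_ext
    apply LinearMap.ext_ring
    change (1 : A) • (k • a) = algebraMap K A k • ((1 : A) • a)
    simp [Algebra.smul_def]

lemma regEnd_mul (K : Type u) [Field K] (A : Type u) [Ring A] [Algebra K A] (a b : A) :
    regEnd K A (a * b) = regEnd K A b * regEnd K A a := by
  apply ModuleCat.hom_ext
  apply LinearMap.ext_ring
  simp [regEnd]

/-- If two `K`-algebras `A` and `B` are Morita equivalent, i.e. there is a `K`-linear
equivalence between their module categories, then `A/[A,A] ≅ B/[B,B]` as `K`-vector spaces. -/
theorem morita_equiv_iso_quot_commutator (K : Type u) [Field K]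
    (A B : Type u) [Ring A] [Algebra K A] [Ring B] [Algebra K B]
    (h : ∃ (e : ModuleCat.{u} A ≌ ModuleCat.{u} B) (_ : e.functor.Additive),
      e.functor.Linear K) :
    Nonempty ((A ⧸ commutatorSubmodule K A) ≃ₗ[K] (B ⧸ commutatorSubmodule K B)) := by
  obtain ⟨e, _, _⟩ := h
  let P := e.functor.obj (ModuleCat.of A A)
  obtain ⟨m, g, f, hgf⟩ := exists_retract_of_separator B P
    ((isSeparator_self A).of_equivalence e)
  obtain ⟨n, u, v, huv⟩ := exists_retract_of_separator A (e.inverse.obj (ModuleCat.of B B))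
    ((isSeparator_self B).of_equivalence e.symm)
  let ε := e.counitIso.app (ModuleCat.of B B)
  have h2 : ∑ j, (e.functor.map (u j) ≫ ε.hom) ≫ (ε.inv ≫ e.functor.map (v j)) = 𝟙 P := by
    have := congrArg e.functor.map huv
    simpa [e.functor.map_sum] using this
  let E : End (ModuleCat.of A A) ≃ₗ[K] End P :=
    LinearEquiv.ofBijective (e.functor.mapLinearMap K (X := ModuleCat.of A A) (Y := ModuleCat.of A A))
      ⟨e.functor.map_injective, e.functor.map_surjective⟩
  let EA : A ≃ₗ[K] End P := (regEnd K A).trans E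
  let EB : B ≃ₗ[K] End (ModuleCat.of B B) := regEnd K B
  have hEA : ∀ x y, EA (x * y) = EA y * EA x := fun x y =>
    (congrArg e.functor.map (regEnd_mul K A x y)).trans (e.functor.map_comp _ _)
  have hEB : ∀ x y, EB (x * y) = EB y * EB x := fun x y => regEnd_mul K B x y
  exact ⟨(commQuotEquivOfAnti K EA hEA).trans
    ((transferEquiv K _ _ h2 g f hgf).trans (commQuotEquivOfAnti K EB hEB).symm)⟩
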